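/- arXiv:1402.5703 — 2 statements merged into one kernel-verified Lean document; each statement's English description precedes it below -/
import Mathlib

section
/- Let g, g' : [0,∞) → ℝ be continuous. Then for every t ≥ 0, sup_{0≤s≤t} |Γ(g)(s) − Γ(g')(s)| ≤ 2 · sup_{0≤s≤t} |g(s) − g'(s)|. In particular the Skorokhod map Γ is continuous with respect to local uniform convergence. -/
/-!
Taking the minimum with `0` and taking an infimum over `[a, t]` are both `1`-Lipschitz in the
supremum distance, so the running minimum that `Γ g` subtracts from `g` moves by at most the
distance between the inputs on `[a, t]`. The path itself contributes the same amount again, which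
gives the constant `2`. Local uniform convergence on `[a, ∞)` amounts to uniform convergence on
every compact interval `[a, t]`, and there the Lipschitz bound applies.
-/

open MeasureTheory Set Filter

section SInf

variable {ι R : Type*} [AddCommGroup R] {s : Set ι} {f g : ι → R} {C : R}

lemma sInf_image_le_sInf_image_add [ConditionallyCompleteLattice R] [IsOrderedAddMonoid R]
    (hs : s.Nonempty) (hf : BddBelow (f '' s)) (h : ∀ x ∈ s, f x ≤ g x + C) :
    sInf (f '' s) ≤ sInf (g '' s) + C := by
  rw [← sub_le_iff_le_add]
  refine le_csInf (hs.image g) (forall_mem_image.2 fun x hx => ?_)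
  exact sub_le_iff_le_add.2 ((csInf_le hf (mem_image_of_mem f hx)).trans (h x hx))

lemma bddBelow_image_of_abs_sub_le [Lattice R] [IsOrderedAddMonoid R]
    (hf : BddBelow (f '' s)) (h : ∀ x ∈ s, |f x - g x| ≤ C) : BddBelow (g '' s) := by
  obtain ⟨b, hb⟩ := hf
  refine ⟨b - C, forall_mem_image.2 fun x hx => sub_le_iff_le_add'.2 ?_⟩
  calc
    b ≤ f x := hb (mem_image_of_mem f hx)
    _ ≤ C + g x := sub_le_iff_le_add.1 ((le_abs_self _).trans (h x hx))

lemma abs_sInf_image_sub_sInf_image_le [ConditionallyCompleteLinearOrder R]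
    [IsOrderedAddMonoid R] (hs : s.Nonempty) (hf : BddBelow (f '' s))
    (h : ∀ x ∈ s, |f x - g x| ≤ C) : |sInf (f '' s) - sInf (g '' s)| ≤ C := by
  have hg : BddBelow (g '' s) := bddBelow_image_of_abs_sub_le hf h
  refine abs_sub_le_iff.2 ⟨sub_le_iff_le_add'.2 ?_, sub_le_iff_le_add'.2 ?_⟩
  · exact sInf_image_le_sInf_image_add hs hf fun x hx =>
      sub_le_iff_le_add'.1 (abs_sub_le_iff.1 (h x hx)).1
  · exact sInf_image_le_sInf_image_add hs hg fun x hx =>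
      sub_le_iff_le_add'.1 (abs_sub_le_iff.1 (h x hx)).2

end SInf

section LocallyUniform

variable {ι α β : Type*} [LinearOrder α] [TopologicalSpace α] [ClosedIciTopology α]

lemma exists_Icc_mem_nhdsWithin_Ici {a x : α} (hx : a ≤ x) :
    ∃ t, a ≤ t ∧ Icc a t ∈ nhdsWithin x (Ici a) := by
  by_cases hmax : IsMax x
  · exact ⟨x, hx, mem_of_superset self_mem_nhdsWithin fun y hy => ⟨hy, hmax.isTop y⟩⟩
  · obtain ⟨t, hxt⟩ := not_isMax_iff.1 hmax
    exact ⟨t, hx.trans hxt.le, inter_mem_nhdsWithin _ (Iic_mem_nhds hxt)⟩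

lemma tendstoLocallyUniformlyOn_Ici_iff [CompactIccSpace α] [UniformSpace β]
    {F : ι → α → β} {f : α → β} {l : Filter ι} {a : α} :
    TendstoLocallyUniformlyOn F f l (Ici a) ↔ ∀ t ≥ a, TendstoUniformlyOn F f l (Icc a t) := by
  refine ⟨fun h t _ => ?_, fun h U hU x hx => ?_⟩
  · exact (tendstoLocallyUniformlyOn_iff_tendstoUniformlyOn_of_compact isCompact_Icc).1
      (h.mono Icc_subset_Ici_self)
  · obtain ⟨t, hat, ht⟩ := exists_Icc_mem_nhdsWithin_Ici hx
    exact ⟨Icc a t, ht, h t hat U hU⟩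

end LocallyUniform

/-- The one-dimensional Skorokhod map `Γ` for paths started at time `a`, over an arbitrary ordered
set of times. The running minimum is encoded as a real `sInf`, so it has its intended meaning only
for `a ≤ t` and `g` bounded below on `[a, t]`. -/
noncomputable def skorokhodMap {α : Type*} [Preorder α] (a : α) (g : α → ℝ) (t : α) : ℝ :=
  g t - sInf ((fun s => min (g s) 0) '' Icc a t)

section SkorokhodMap

variable {α : Type*} [Preorder α] {a t : α} {g g' : α → ℝ}

lemma abs_skorokhodMap_sub_le {C : ℝ} (hat : a ≤ t) (hg : BddBelow (g '' Icc a t))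
    (h : ∀ s ∈ Icc a t, |g s - g' s| ≤ C) :
    |skorokhodMap a g t - skorokhodMap a g' t| ≤ 2 * C := by
  have hbdd : BddBelow ((fun s => min (g s) 0) '' Icc a t) := by
    obtain ⟨b, hb⟩ := hg
    exact ⟨min b 0, forall_mem_image.2 fun s hs =>
      min_le_min_right 0 (hb (mem_image_of_mem g hs))⟩
  have hmin : ∀ s ∈ Icc a t, |min (g s) 0 - min (g' s) 0| ≤ C := fun s hs =>
    (abs_inf_sub_inf_le_abs (g s) (g' s) 0).trans (h s hs)
  calc
    |skorokhodMap a g t - skorokhodMap a g' t|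
      = |(g t - g' t) - (sInf ((fun s => min (g s) 0) '' Icc a t) -
          sInf ((fun s => min (g' s) 0) '' Icc a t))| := by
        rw [skorokhodMap, skorokhodMap, sub_sub_sub_comm]
    _ ≤ |g t - g' t| + |sInf ((fun s => min (g s) 0) '' Icc a t) -
          sInf ((fun s => min (g' s) 0) '' Icc a t)| := abs_sub _ _
    _ ≤ C + C := add_le_add (h t (right_mem_Icc.2 hat))
        (abs_sInf_image_sub_sInf_image_le (nonempty_Icc.2 hat) hbdd hmin)
    _ = 2 * C := (two_mul C).symm

lemma abs_skorokhodMap_sub_le_of_mem_Icc {C : ℝ} {s : α} (hs : s ∈ Icc a t)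
    (hg : BddBelow (g '' Icc a t)) (h : ∀ r ∈ Icc a t, |g r - g' r| ≤ C) :
    |skorokhodMap a g s - skorokhodMap a g' s| ≤ 2 * C :=
  have hst : Icc a s ⊆ Icc a t := Icc_subset_Icc_right hs.2
  abs_skorokhodMap_sub_le hs.1 (hg.mono (image_mono hst)) fun r hr => h r (hst hr)

lemma sSup_abs_skorokhodMap_sub_le (hat : a ≤ t) (hg : BddBelow (g '' Icc a t))
    (hgg' : BddAbove ((fun s => |g s - g' s|) '' Icc a t)) :
    sSup ((fun s => |skorokhodMap a g s - skorokhodMap a g' s|) '' Icc a t) ≤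
      2 * sSup ((fun s => |g s - g' s|) '' Icc a t) :=
  csSup_le ((nonempty_Icc.2 hat).image _) <| forall_mem_image.2 fun _ hs =>
    abs_skorokhodMap_sub_le_of_mem_Icc hs hg fun _ hr => le_csSup hgg' (mem_image_of_mem _ hr)

lemma tendstoUniformlyOn_skorokhodMap {ι : Type*} {l : Filter ι} {F : ι → α → ℝ} {f : α → ℝ}
    (hf : BddBelow (f '' Icc a t)) (h : TendstoUniformlyOn F f l (Icc a t)) :
    TendstoUniformlyOn (fun i => skorokhodMap a (F i)) (skorokhodMap a f) l (Icc a t) := by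
  rw [Metric.tendstoUniformlyOn_iff] at h ⊢
  intro ε hε
  filter_upwards [h (ε / 3) (by positivity)] with i hi s hs
  calc
    dist (skorokhodMap a f s) (skorokhodMap a (F i) s) ≤ 2 * (ε / 3) :=
      abs_skorokhodMap_sub_le_of_mem_Icc hs hf fun r hr => (hi r hr).le
    _ < ε := by linarith

end SkorokhodMap

theorem skorokhod_map_lipschitz_general {α ι : Type*} [LinearOrder α] [TopologicalSpace α]
    [ClosedIciTopology α] [CompactIccSpace α] (a : α) (l : Filter ι) (g g' : α → ℝ)
    (hg : ∀ t ≥ a, BddBelow (g '' Icc a t))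
    (hgg' : ∀ t ≥ a, BddAbove ((fun s => |g s - g' s|) '' Icc a t)) :
    (∀ t ≥ a,
      sSup ((fun s => |skorokhodMap a g s - skorokhodMap a g' s|) '' Icc a t) ≤
        2 * sSup ((fun s => |g s - g' s|) '' Icc a t)) ∧
    (∀ (F : ι → α → ℝ) (f : α → ℝ), (∀ t ≥ a, BddBelow (f '' Icc a t)) →
      TendstoLocallyUniformlyOn F f l (Ici a) →
      TendstoLocallyUniformlyOn (fun i => skorokhodMap a (F i)) (skorokhodMap a f) l (Ici a)) := by
  refine ⟨fun t ht => sSup_abs_skorokhodMap_sub_le ht (hg t ht) (hgg' t ht), fun F f hf h => ?_⟩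
  rw [tendstoLocallyUniformlyOn_Ici_iff] at h ⊢
  exact fun t ht => tendstoUniformlyOn_skorokhodMap (hf t ht) (h t ht)

/-- The one-dimensional Skorokhod map `Γ(g)(t) = g t - min_{0 ≤ s ≤ t} (min (g s) 0)`
is Lipschitz with constant `2` in the supremum distance on each `[0, t]`; in
particular it is (sequentially) continuous with respect to local uniform
convergence on `[0,∞)`. -/
theorem skorokhod_map_lipschitz
    (Γ : (ℝ → ℝ) → ℝ → ℝ)
    (hΓ : ∀ (u : ℝ → ℝ) (t : ℝ),
      Γ u t = u t - sInf ((fun s => min (u s) 0) '' Set.Icc 0 t))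
    (g g' : ℝ → ℝ) (hg : ContinuousOn g (Set.Ici 0))
    (hg' : ContinuousOn g' (Set.Ici 0)) :
    (∀ t ≥ (0 : ℝ),
      sSup ((fun s => |Γ g s - Γ g' s|) '' Set.Icc 0 t) ≤
        2 * sSup ((fun s => |g s - g' s|) '' Set.Icc 0 t)) ∧
    (∀ (F : ℕ → ℝ → ℝ) (f : ℝ → ℝ), (∀ n, ContinuousOn (F n) (Set.Ici 0)) →
      ContinuousOn f (Set.Ici 0) →
      TendstoLocallyUniformlyOn F f atTop (Set.Ici 0) →
      TendstoLocallyUniformlyOn (fun n => Γ (F n)) (Γ f) atTop (Set.Ici 0)) := by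
  obtain rfl : Γ = skorokhodMap 0 := funext₂ hΓ
  have bddBelow {u : ℝ → ℝ} (hu : ContinuousOn u (Ici 0)) (t : ℝ) (_ : t ≥ 0) :
      BddBelow (u '' Icc 0 t) :=
    isCompact_Icc.bddBelow_image (hu.mono Icc_subset_Ici_self)
  have bddAbove (t : ℝ) (_ : t ≥ 0) : BddAbove ((fun s => |g s - g' s|) '' Icc 0 t) :=
    isCompact_Icc.bddAbove_image ((hg.sub hg').mono Icc_subset_Ici_self).abs
  obtain ⟨hlip, hcont⟩ :=
    skorokhod_map_lipschitz_general 0 (atTop : Filter ℕ) g g' (bddBelow hg) bddAbove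
  exact ⟨hlip, fun F f _ hf => hcont F f (bddBelow hf)⟩
end

section
/- Let (Ω, F, P) be a probability space with a filtration (F_k)_{k∈ℕ}, let x ∈ ℤ, and let (U_k)_{k∈ℕ} be an integer-valued (F_k)-adapted process with U_0 = x almost surely, such that for every k, |U_{k+1} − U_k| = 1 almost surely and 1_{U_k ≠ 0} · E[U_{k+1} − U_k | F_k] = 0 almost surely. Then for every k ∈ ℕ, E[ #{ i : 0 ≤ i < k, U_i = 0 } ] ≤ |x| + √k. -/
open MeasureTheory Finset

/-!
Let `V k = |U k| - |U 0|` and `D k = U (k + 1) - U k`. Convexity of the absolute value gives the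
discrete Tanaka inequality `V (k + 1) ≥ V k + sign (U k) * D k + 1_{U k = 0}`, and also
`V (k + 1) ^ 2 ≤ V k ^ 2 + 2 * V k * sign (U k) * D k + 1`. The weights in front of `D k` are
bounded, known at time `k` and vanish where `U k = 0`, so these terms have mean zero. Hence the
expected number of visits to `0` is at most `E[V k] ≤ √E[V k ^ 2] ≤ √k`. Subtracting `|U 0|` makes
`V k` bounded by `k`, whatever the law of `U 0`.
-/

section Sign

open SignType (sign)

variable {R : Type*} [CommRing R] [LinearOrder R] [IsStrictOrderedRing R]

theorem abs_add_sign_mul_sub_le_abs (u v : R) : |u| + sign u * (v - u) ≤ |v| := by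
  have hsign : (sign u * v : R) ≤ |v| := by
    cases sign u <;> simp [neg_le_abs, le_abs_self]
  linear_combination hsign - sign_mul_self u

theorem abs_sub_sq_le (u v : R) {r : R} (hr : 0 ≤ r) :
    (|v| - r) ^ 2 ≤ (|u| - r) ^ 2 + 2 * (|u| - r) * sign u * (v - u) + (v - u) ^ 2 := by
  linear_combination 2 * mul_le_mul_of_nonneg_left (abs_add_sign_mul_sub_le_abs u v) hr
    + sq_abs v - sq_abs u - 2 * (v - u) * abs_mul_sign u

theorem abs_coe_sign_le_one (x : R) : |(sign x : R)| ≤ 1 := by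
  cases sign x <;> simp

theorem measurable_coe_sign : Measurable fun x : ℝ ↦ (sign x : ℝ) := by
  simp only [sign_apply, apply_ite (SignType.cast : SignType → ℝ)]
  exact .ite measurableSet_Ioi measurable_const
    (.ite measurableSet_Iio measurable_const measurable_const)

end Sign

section Integral

variable {Ω : Type*} {m0 : MeasurableSpace Ω} {μ : Measure Ω}

theorem integral_mul_eq_zero_of_condExp_eq_zero {m : MeasurableSpace Ω} (hm : m ≤ m0)
    [SigmaFinite (μ.trim hm)] {f g : Ω → ℝ} (hf : AEStronglyMeasurable[m] f μ)
    (hfg : Integrable (f * g) μ) (hg : Integrable g μ)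
    (hzero : ∀ᵐ ω ∂μ, f ω ≠ 0 → (μ[g | m]) ω = 0) :
    ∫ ω, f ω * g ω ∂μ = 0 := by
  have hcond : μ[f * g | m] =ᵐ[μ] 0 := by
    filter_upwards [condExp_mul_of_aestronglyMeasurable_left hf hfg hg, hzero] with ω hpull hω
    rw [hpull]
    exact mul_eq_zero.2 (or_iff_not_imp_left.2 hω)
  calc ∫ ω, f ω * g ω ∂μ = ∫ ω, (μ[f * g | m]) ω ∂μ := (integral_condExp hm).symm
    _ = 0 := integral_eq_zero_of_ae hcond

theorem integral_card_filter_eq_sum_measureReal [IsFiniteMeasure μ] {ι : Type*} (s : Finset ι)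
    (p : ι → Ω → Prop) [∀ ω, DecidablePred (p · ω)]
    (hp : ∀ i ∈ s, MeasurableSet {ω | p i ω}) :
    ∫ ω, ((s.filter (p · ω)).card : ℝ) ∂μ = ∑ i ∈ s, μ.real {ω | p i ω} := by
  have hcard : ∀ ω, ((s.filter (p · ω)).card : ℝ) = ∑ i ∈ s, {ω | p i ω}.indicator 1 ω := by
    intro ω
    simp [Set.indicator_apply]
  simp_rw [hcard]
  rw [integral_finsetSum s fun i hi ↦ (integrable_const 1).indicator (hp i hi)]
  exact sum_congr rfl fun i hi ↦ integral_indicator_one (hp i hi)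

theorem sq_integral_le_integral_sq [IsProbabilityMeasure μ] {X : Ω → ℝ} (hX : MemLp X 2 μ) :
    (∫ ω, X ω ∂μ) ^ 2 ≤ ∫ ω, X ω ^ 2 ∂μ :=
  sub_nonneg.1 <| (ProbabilityTheory.variance_nonneg X μ).trans_eq <|
    ProbabilityTheory.variance_eq_sub hX

end Integral

/-- The displacement `|U k| - |U 0|` of the distance to the origin of a real process `U`, whose mean
is compared with the expected number of visits of `U` to `0`. -/
def absDisplacement {Ω : Type*} (U : ℕ → Ω → ℝ) (k : ℕ) (ω : Ω) : ℝ :=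
  |U k ω| - |U 0 ω|

namespace absDisplacement

open SignType (sign)

variable {Ω : Type*} {m0 : MeasurableSpace Ω} {μ : Measure Ω} {ℱ : Filtration ℕ m0}
  {U : ℕ → Ω → ℝ}

theorem ae_abs_le (hinc : ∀ k, ∀ᵐ ω ∂μ, |U (k + 1) ω - U k ω| ≤ 1) (k : ℕ) :
    ∀ᵐ ω ∂μ, |absDisplacement U k ω| ≤ k := by
  have hdist : ∀ᵐ ω ∂μ, |U k ω - U 0 ω| ≤ k := by
    induction k with
    | zero => simp
    | succ k ih =>
      filter_upwards [ih, hinc k] with ω hk hstep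
      have htriangle := abs_sub_le (U (k + 1) ω) (U k ω) (U 0 ω)
      push_cast
      linarith
  exact hdist.mono fun ω h ↦ (abs_abs_sub_abs_le _ _).trans h

theorem measurable (hadp : Adapted ℱ U) (k : ℕ) : Measurable[ℱ k] (absDisplacement U k) :=
  have hU0 : Measurable[ℱ k] (U 0) := (hadp 0).mono (ℱ.mono k.zero_le) le_rfl
  Measurable.sub (measurable_abs.comp (hadp k)) (measurable_abs.comp hU0)

theorem memLp [IsFiniteMeasure μ] (hadp : Adapted ℱ U)
    (hinc : ∀ k, ∀ᵐ ω ∂μ, |U (k + 1) ω - U k ω| ≤ 1) (p : ENNReal) (k : ℕ) :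
    MemLp (absDisplacement U k) p μ :=
  .of_bound ((measurable hadp k).mono (ℱ.le k) le_rfl).aestronglyMeasurable k (ae_abs_le hinc k)

theorem integrable [IsFiniteMeasure μ] (hadp : Adapted ℱ U)
    (hinc : ∀ k, ∀ᵐ ω ∂μ, |U (k + 1) ω - U k ω| ≤ 1) (k : ℕ) :
    Integrable (absDisplacement U k) μ :=
  memLp_one_iff_integrable.1 (memLp hadp hinc 1 k)

end absDisplacement

section CenteredOffZero

open SignType (sign)

variable {Ω : Type*} {m0 : MeasurableSpace Ω} {μ : Measure Ω} {ℱ : Filtration ℕ m0}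
  {U : ℕ → Ω → ℝ} {k : ℕ} {w : Ω → ℝ} {C : ℝ}

theorem integrable_increment [IsFiniteMeasure μ] (hadp : Adapted ℱ U)
    (hinc : ∀ᵐ ω ∂μ, |U (k + 1) ω - U k ω| ≤ 1) :
    Integrable (fun ω ↦ U (k + 1) ω - U k ω) μ :=
  have hmeas : ∀ n, Measurable (U n) := fun n ↦ (hadp n).mono (ℱ.le n) le_rfl
  .of_bound ((hmeas (k + 1)).sub (hmeas k)).aestronglyMeasurable 1 hinc

theorem integrable_mul_sign_mul_increment [IsFiniteMeasure μ] (hadp : Adapted ℱ U)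
    (hinc : ∀ᵐ ω ∂μ, |U (k + 1) ω - U k ω| ≤ 1) (hw : Measurable w) (hwC : ∀ᵐ ω ∂μ, |w ω| ≤ C) :
    Integrable (fun ω ↦ w ω * sign (U k ω) * (U (k + 1) ω - U k ω)) μ := by
  have hsign : Measurable fun ω ↦ (sign (U k ω) : ℝ) :=
    measurable_coe_sign.comp ((hadp k).mono (ℱ.le k) le_rfl)
  refine (integrable_increment hadp hinc).bdd_mul (hw.mul hsign).aestronglyMeasurable (c := C) ?_
  filter_upwards [hwC] with ω hω
  rw [Real.norm_eq_abs, abs_mul]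
  exact (mul_le_of_le_one_right (abs_nonneg _) (abs_coe_sign_le_one _)).trans hω

theorem integral_mul_sign_mul_increment_eq_zero [IsFiniteMeasure μ] (hadp : Adapted ℱ U)
    (hinc : ∀ᵐ ω ∂μ, |U (k + 1) ω - U k ω| ≤ 1)
    (hcentered : ∀ᵐ ω ∂μ, U k ω ≠ 0 → (μ[fun ω' ↦ U (k + 1) ω' - U k ω' | ℱ k]) ω = 0)
    (hw : Measurable[ℱ k] w) (hwC : ∀ᵐ ω ∂μ, |w ω| ≤ C) :
    ∫ ω, w ω * sign (U k ω) * (U (k + 1) ω - U k ω) ∂μ = 0 := by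
  have hweight : Measurable[ℱ k] fun ω ↦ w ω * (sign (U k ω) : ℝ) :=
    hw.mul (measurable_coe_sign.comp (hadp k))
  refine integral_mul_eq_zero_of_condExp_eq_zero (ℱ.le k)
    hweight.stronglyMeasurable.aestronglyMeasurable
    (integrable_mul_sign_mul_increment hadp hinc (hw.mono (ℱ.le k) le_rfl) hwC)
    (integrable_increment hadp hinc) (hcentered.mono fun _ hω hne ↦ hω fun hU ↦ hne ?_)
  simp [hU]

theorem integral_absDisplacement_add_measureReal_le [IsFiniteMeasure μ] (hadp : Adapted ℱ U)
    (hinc : ∀ k, ∀ᵐ ω ∂μ, |U (k + 1) ω - U k ω| ≤ 1)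
    (hzero : ∀ᵐ ω ∂μ, U k ω = 0 → 1 ≤ |U (k + 1) ω|)
    (hcentered : ∀ᵐ ω ∂μ, U k ω ≠ 0 → (μ[fun ω' ↦ U (k + 1) ω' - U k ω' | ℱ k]) ω = 0) :
    ∫ ω, absDisplacement U k ω ∂μ + μ.real {ω | U k ω = 0}
      ≤ ∫ ω, absDisplacement U (k + 1) ω ∂μ := by
  let D : Ω → ℝ := fun ω ↦ 1 * sign (U k ω) * (U (k + 1) ω - U k ω)
  have hone : ∀ᵐ _ ∂μ, |(1 : ℝ)| ≤ 1 := .of_forall fun _ ↦ abs_one.le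
  have hD : Integrable D μ :=
    integrable_mul_sign_mul_increment hadp (hinc k) measurable_const hone
  have hD0 : ∫ ω, D ω ∂μ = 0 :=
    integral_mul_sign_mul_increment_eq_zero hadp (hinc k) hcentered measurable_const hone
  have hset : MeasurableSet {ω | U k ω = 0} :=
    ℱ.le k _ (hadp k (measurableSet_singleton 0))
  have hV := absDisplacement.integrable hadp hinc
  have hind : Integrable ({ω | U k ω = 0}.indicator (1 : Ω → ℝ)) μ :=
    (integrable_const 1).indicator hset
  have htanaka : ∀ᵐ ω ∂μ, absDisplacement U k ω + D ω + {ω | U k ω = 0}.indicator 1 ω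
      ≤ absDisplacement U (k + 1) ω := by
    filter_upwards [hzero] with ω hω
    unfold absDisplacement
    by_cases hU : U k ω = 0
    · simp [D, hU, hω hU]
    · simp only [D, Set.indicator_of_notMem (show ω ∉ {ω | U k ω = 0} from hU)]
      linarith [abs_add_sign_mul_sub_le_abs (U k ω) (U (k + 1) ω)]
  have hle := integral_mono_ae (((hV k).fun_add hD).fun_add hind) (hV (k + 1)) htanaka
  rwa [integral_add ((hV k).fun_add hD) hind, integral_add (hV k) hD, hD0, add_zero,
    integral_indicator_one hset] at hle

theorem integral_absDisplacement_succ_sq_le [IsProbabilityMeasure μ] (hadp : Adapted ℱ U)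
    (hinc : ∀ k, ∀ᵐ ω ∂μ, |U (k + 1) ω - U k ω| ≤ 1)
    (hcentered : ∀ᵐ ω ∂μ, U k ω ≠ 0 → (μ[fun ω' ↦ U (k + 1) ω' - U k ω' | ℱ k]) ω = 0) :
    ∫ ω, absDisplacement U (k + 1) ω ^ 2 ∂μ ≤ ∫ ω, absDisplacement U k ω ^ 2 ∂μ + 1 := by
  let D : Ω → ℝ := fun ω ↦ 2 * absDisplacement U k ω * sign (U k ω) * (U (k + 1) ω - U k ω)
  have hw : Measurable[ℱ k] fun ω ↦ 2 * absDisplacement U k ω :=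
    (absDisplacement.measurable hadp k).const_mul 2
  have hwC : ∀ᵐ ω ∂μ, |2 * absDisplacement U k ω| ≤ 2 * k := by
    filter_upwards [absDisplacement.ae_abs_le hinc k] with ω hω
    rw [abs_mul, abs_two]
    gcongr
  have hD : Integrable D μ :=
    integrable_mul_sign_mul_increment hadp (hinc k) (hw.mono (ℱ.le k) le_rfl) hwC
  have hD0 : ∫ ω, D ω ∂μ = 0 :=
    integral_mul_sign_mul_increment_eq_zero hadp (hinc k) hcentered hw hwC
  have hV n : Integrable (fun ω ↦ absDisplacement U n ω ^ 2) μ :=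
    (absDisplacement.memLp hadp hinc 2 n).integrable_sq
  have hsq : ∀ᵐ ω ∂μ, absDisplacement U (k + 1) ω ^ 2 ≤ absDisplacement U k ω ^ 2 + D ω + 1 := by
    filter_upwards [hinc k] with ω hω
    exact (abs_sub_sq_le (U k ω) (U (k + 1) ω) (abs_nonneg (U 0 ω))).trans
      (add_le_add_right ((sq_le_one_iff_abs_le_one _).2 hω) _)
  calc ∫ ω, absDisplacement U (k + 1) ω ^ 2 ∂μ
      ≤ ∫ ω, (absDisplacement U k ω ^ 2 + D ω + 1) ∂μ :=
        integral_mono_ae (hV (k + 1)) (((hV k).fun_add hD).fun_add (integrable_const 1)) hsq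
    _ = ∫ ω, absDisplacement U k ω ^ 2 ∂μ + 1 := by
        rw [integral_add ((hV k).fun_add hD) (integrable_const 1), integral_add (hV k) hD, hD0,
          add_zero, integral_const, probReal_univ, one_smul]

theorem sum_measureReal_le_integral_absDisplacement [IsFiniteMeasure μ] (hadp : Adapted ℱ U)
    (hinc : ∀ k, ∀ᵐ ω ∂μ, |U (k + 1) ω - U k ω| ≤ 1)
    (hzero : ∀ k, ∀ᵐ ω ∂μ, U k ω = 0 → 1 ≤ |U (k + 1) ω|)
    (hcentered : ∀ k, ∀ᵐ ω ∂μ,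
      U k ω ≠ 0 → (μ[fun ω' ↦ U (k + 1) ω' - U k ω' | ℱ k]) ω = 0) (k : ℕ) :
    ∑ i ∈ range k, μ.real {ω | U i ω = 0} ≤ ∫ ω, absDisplacement U k ω ∂μ := by
  induction k with
  | zero => simp [absDisplacement]
  | succ k ih =>
    rw [sum_range_succ]
    have hstep := integral_absDisplacement_add_measureReal_le hadp hinc (hzero k) (hcentered k)
    linarith

theorem integral_absDisplacement_sq_le [IsProbabilityMeasure μ] (hadp : Adapted ℱ U)
    (hinc : ∀ k, ∀ᵐ ω ∂μ, |U (k + 1) ω - U k ω| ≤ 1)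
    (hcentered : ∀ k, ∀ᵐ ω ∂μ,
      U k ω ≠ 0 → (μ[fun ω' ↦ U (k + 1) ω' - U k ω' | ℱ k]) ω = 0) (k : ℕ) :
    ∫ ω, absDisplacement U k ω ^ 2 ∂μ ≤ k := by
  induction k with
  | zero => simp [absDisplacement]
  | succ k ih =>
    push_cast
    have hstep := integral_absDisplacement_succ_sq_le hadp hinc (hcentered k)
    linarith

theorem expected_occupation_time_le_general [IsProbabilityMeasure μ] (hadp : Adapted ℱ U)
    (hinc : ∀ k, ∀ᵐ ω ∂μ, |U (k + 1) ω - U k ω| ≤ 1)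
    (hzero : ∀ k, ∀ᵐ ω ∂μ, U k ω = 0 → 1 ≤ |U (k + 1) ω|)
    (hcentered : ∀ k, ∀ᵐ ω ∂μ,
      U k ω ≠ 0 → (μ[fun ω' ↦ U (k + 1) ω' - U k ω' | ℱ k]) ω = 0) (k : ℕ) :
    ∫ ω, (((range k).filter (fun i ↦ U i ω = 0)).card : ℝ) ∂μ ≤ √k := by
  have hset : ∀ i ∈ range k, MeasurableSet {ω | U i ω = 0} :=
    fun i _ ↦ ℱ.le i _ (hadp i (measurableSet_singleton 0))
  calc ∫ ω, (((range k).filter (fun i ↦ U i ω = 0)).card : ℝ) ∂μ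
      = ∑ i ∈ range k, μ.real {ω | U i ω = 0} :=
        integral_card_filter_eq_sum_measureReal _ (fun i ω ↦ U i ω = 0) hset
    _ ≤ ∫ ω, absDisplacement U k ω ∂μ :=
        sum_measureReal_le_integral_absDisplacement hadp hinc hzero hcentered k
    _ ≤ √(∫ ω, absDisplacement U k ω ^ 2 ∂μ) :=
        Real.le_sqrt_of_sq_le (sq_integral_le_integral_sq (absDisplacement.memLp hadp hinc 2 k))
    _ ≤ √k := Real.sqrt_le_sqrt (integral_absDisplacement_sq_le hadp hinc hcentered k)

end CenteredOffZero

/-- Occupation-time bound (estimate (3.15)): if `U` is an adapted integer-valued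
process started at `x ∈ ℤ` with `|U_{k+1} - U_k| = 1` a.s. whose increments are
conditionally centered off zero (`1_{U_k ≠ 0} E[U_{k+1} - U_k | ℱ k] = 0` a.s.),
then the expected number of visits to `0` before time `k` is at most `|x| + √k`. -/
theorem expected_occupation_time_le
    {Ω : Type*} {m0 : MeasurableSpace Ω} {μ : Measure Ω} [IsProbabilityMeasure μ]
    (ℱ : Filtration ℕ m0) (x : ℤ)
    (U : ℕ → Ω → ℝ) (hadp : Adapted ℱ U)
    (hU0 : ∀ᵐ ω ∂μ, U 0 ω = (x : ℝ))
    (hint : ∀ k, ∀ᵐ ω ∂μ, ∃ n : ℤ, U k ω = (n : ℝ))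
    (hinc : ∀ k, ∀ᵐ ω ∂μ, |U (k + 1) ω - U k ω| = 1)
    (hcentered : ∀ k, ∀ᵐ ω ∂μ,
      U k ω ≠ 0 → (μ[fun ω' => U (k + 1) ω' - U k ω' | ℱ k]) ω = 0) :
    ∀ k : ℕ,
      (∫ ω, (((Finset.range k).filter (fun i => U i ω = 0)).card : ℝ) ∂μ)
        ≤ |(x : ℝ)| + Real.sqrt k := by
  intro k
  have hzero : ∀ i, ∀ᵐ ω ∂μ, U i ω = 0 → 1 ≤ |U (i + 1) ω| := fun i ↦
    (hinc i).mono fun ω hω hU ↦ by simpa [hU] using hω.ge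
  exact (expected_occupation_time_le_general hadp (fun i ↦ (hinc i).mono fun _ ↦ le_of_eq) hzero
    hcentered k).trans (le_add_of_nonneg_left (abs_nonneg _))
end
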